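/- Let ω = e^{2πi/3} and χ = 1 − ω. The group of 3×3 unitary matrices generated by H = (1/√(−3))[[1,1,1],[1,ω,ω²],[1,ω²,ω]], S = diag(1, ω, 1), and R = diag(1, 1, −1) is equal to U(3, ℤ[ω][1/χ]), the group of all 3×3 unitary matrices whose entries lie in ℤ[ω][1/χ]. -/

import Mathlib

noncomputable section

/-- `ω = e^{2πi/3}`, a primitive 3rd root of unity. -/
def ω : ℂ := Complex.exp (2 * Real.pi * Complex.I / 3)

/-- `χ = 1 − ω`. -/
def χ : ℂ := 1 - ω

/-- The ring of cyclotomic integers `ℤ[ω]`, as a subring of `ℂ`. -/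
def Zω : Subring ℂ := Subring.closure {ω}

/-- The qutrit Hadamard gate `H = (1/√(−3))[[1,1,1],[1,ω,ω²],[1,ω²,ω]]`,
where `√(−3) = ω(1 − ω)`. -/
def Hgate : Matrix (Fin 3) (Fin 3) ℂ :=
  (ω * (1 - ω))⁻¹ • !![1, 1, 1; 1, ω, ω ^ 2; 1, ω ^ 2, ω]

/-- `S = diag(1, ω, 1)`. -/
def Sgate : Matrix (Fin 3) (Fin 3) ℂ := Matrix.diagonal ![1, ω, 1]

/-- The metaplectic gate `R = diag(1, 1, −1)`. -/
def Rgate : Matrix (Fin 3) (Fin 3) ℂ := Matrix.diagonal ![1, 1, -1]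

/-!
A unit vector over `ℤ[ω][1/χ]`, scaled by `χ ^ k` to an integral vector `x`, has
`∑ ‖x i‖ ^ 2 = 3 ^ k`. As `‖z‖ ^ 2` is `0` or `1` modulo `3` according to whether `χ` divides `z`,
for `k > 0` either all or none of the three entries of `x` are divisible by `χ`. In the first case
`k` can be lowered at once. In the second, the units `±1, ±ω, ±ω²` represent all units modulo `3`,
so a diagonal Clifford+R gate makes `x` congruent to `(1, 1, 1)` modulo `3`, and `H` then maps it to
a multiple of `χ`. Repeating this makes one column of a unitary matrix integral. That column has a
single nonzero entry, of norm `1`, so each other column has a zero entry; it then always falls into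
the first case and is integral as well. An integral unitary matrix is a permutation matrix up to
unit phases, and all of these are Clifford+R gates.
-/

open Matrix

section EisensteinIntegers

theorem isPrimitiveRoot_ω : IsPrimitiveRoot ω 3 := by
  simpa [ω] using Complex.isPrimitiveRoot_exp 3 (by norm_num)

theorem ω_pow_three : ω ^ 3 = 1 := isPrimitiveRoot_ω.pow_eq_one

theorem ω_sq : ω ^ 2 = -1 - ω := by
  have h : 1 + ω + ω ^ 2 = 0 := by
    simpa [Finset.sum_range_succ] using isPrimitiveRoot_ω.geom_sum_eq_zero (by norm_num)
  linear_combination h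

theorem norm_ω : ‖ω‖ = 1 := isPrimitiveRoot_ω.norm'_eq_one (by norm_num)

theorem star_ω : star ω = ω ^ 2 := by
  have h : star ω = ω⁻¹ := (RCLike.inv_eq_conj norm_ω).symm
  rw [h]
  exact inv_eq_of_mul_eq_one_right (by linear_combination ω_pow_three)

theorem χ_ne_zero : χ ≠ 0 :=
  sub_ne_zero.2 (isPrimitiveRoot_ω.ne_one (by norm_num)).symm

theorem χ_sq : χ ^ 2 = -3 * ω := by
  unfold χ
  linear_combination ω_sq

theorem star_χ : star χ = -ω ^ 2 * χ := by
  rw [χ, star_sub, star_one, star_ω]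
  linear_combination -ω_pow_three

theorem norm_χ_sq : ‖χ‖ ^ 2 = 3 := by
  rw [← norm_pow, χ_sq, norm_mul, norm_ω, norm_neg, mul_one]
  simp

theorem ω_mem_Zω : ω ∈ Zω := Subring.subset_closure rfl

theorem χ_mem_Zω : χ ∈ Zω := sub_mem (one_mem _) ω_mem_Zω

theorem mem_Zω_iff {x : ℂ} : x ∈ Zω ↔ ∃ a b : ℤ, x = a + b * ω := by
  constructor
  · intro hx
    induction hx using Subring.closure_induction with
    | mem x hx => exact ⟨0, 1, by simpa using hx⟩
    | zero => exact ⟨0, 0, by simp⟩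
    | one => exact ⟨1, 0, by simp⟩
    | add x y _ _ hx hy =>
      obtain ⟨⟨a, b, rfl⟩, c, d, rfl⟩ := And.intro hx hy
      exact ⟨a + c, b + d, by push_cast; ring⟩
    | neg x _ hx =>
      obtain ⟨a, b, rfl⟩ := hx
      exact ⟨-a, -b, by push_cast; ring⟩
    | mul x y _ _ hx hy =>
      obtain ⟨⟨a, b, rfl⟩, c, d, rfl⟩ := And.intro hx hy
      refine ⟨a * c - b * d, a * d + b * c - b * d, ?_⟩
      push_cast
      linear_combination (b * d : ℂ) * ω_sq
  · rintro ⟨a, b, rfl⟩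
    exact add_mem (intCast_mem _ _) (mul_mem (intCast_mem _ _) ω_mem_Zω)

theorem star_mem_Zω {x : ℂ} (hx : x ∈ Zω) : star x ∈ Zω := by
  obtain ⟨a, b, rfl⟩ := mem_Zω_iff.1 hx
  rw [star_add, star_mul', star_ω, star_intCast, star_intCast]
  exact add_mem (intCast_mem _ _) (mul_mem (intCast_mem _ _) (pow_mem ω_mem_Zω 2))

theorem sq_norm_add_mul_ω (a b : ℝ) : ‖(a + b * ω : ℂ)‖ ^ 2 = (a + b) ^ 2 - 3 * (a * b) := by
  have hstar : star (a + b * ω : ℂ) = a + b * ω ^ 2 := by simp [← star_ω]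
  have h : ((‖(a + b * ω : ℂ)‖ ^ 2 : ℝ) : ℂ) = star (a + b * ω : ℂ) * (a + b * ω) := by
    rw [Complex.ofReal_pow]
    exact (Complex.conj_mul' _).symm
  apply Complex.ofReal_injective
  rw [h, hstar]
  push_cast
  linear_combination (a * b : ℂ) * ω_sq + b ^ 2 * ω_pow_three

theorem exists_natCast_eq_sq_norm {x : ℂ} (hx : x ∈ Zω) : ∃ n : ℕ, ‖x‖ ^ 2 = n := by
  obtain ⟨a, b, rfl⟩ := mem_Zω_iff.1 hx
  have hN : ‖(a + b * ω : ℂ)‖ ^ 2 = ((a + b) ^ 2 - 3 * (a * b) : ℤ) := by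
    exact_mod_cast sq_norm_add_mul_ω a b
  have hnonneg : 0 ≤ (a + b) ^ 2 - 3 * (a * b) := by
    exact_mod_cast hN ▸ sq_nonneg ‖(a + b * ω : ℂ)‖
  obtain ⟨n, hn⟩ := Int.eq_ofNat_of_zero_le hnonneg
  exact ⟨n, by rw [hN, hn, Int.cast_natCast]⟩

theorem eq_zero_of_mem_Zω_of_norm_lt_one {x : ℂ} (hx : x ∈ Zω) (h : ‖x‖ < 1) : x = 0 := by
  obtain ⟨n, hn⟩ := exists_natCast_eq_sq_norm hx
  have hlt : (n : ℝ) < 1 := by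
    rw [← hn]
    exact pow_lt_one₀ (norm_nonneg x) h two_ne_zero
  rw [Nat.cast_lt_one.1 hlt] at hn
  simpa using hn

theorem sq_norm_eq_three_mul_sq_norm_div_χ (x : ℂ) : ‖x‖ ^ 2 = 3 * ‖x / χ‖ ^ 2 := by
  rw [← norm_χ_sq, ← mul_pow, ← norm_mul, mul_div_cancel₀ _ χ_ne_zero]

theorem add_mul_ω_div_χ_mem_Zω_iff (a b : ℤ) : (a + b * ω : ℂ) / χ ∈ Zω ↔ 3 ∣ a + b := by
  constructor
  · intro h
    obtain ⟨n, hn⟩ := exists_natCast_eq_sq_norm h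
    have hN : (a + b) ^ 2 - 3 * (a * b) = 3 * (n : ℤ) := by
      have := sq_norm_eq_three_mul_sq_norm_div_χ (a + b * ω)
      rw [hn] at this
      exact_mod_cast (sq_norm_add_mul_ω a b).symm.trans this
    exact Int.prime_three.dvd_of_dvd_pow (n := 2) ⟨n + a * b, by linear_combination hN⟩
  · rintro ⟨q, hq⟩
    have hq' : (a + b : ℂ) = 3 * q := by exact_mod_cast hq
    have hχ : χ = 1 - ω := rfl
    have h : (a + b * ω : ℂ) / χ = -ω ^ 2 * χ * q - b := by
      rw [div_eq_iff χ_ne_zero]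
      linear_combination hq' + ω ^ 2 * q * χ_sq - 3 * q * ω_pow_three + b * hχ
    rw [h]
    exact sub_mem (mul_mem (mul_mem (neg_mem (pow_mem ω_mem_Zω 2)) χ_mem_Zω) (intCast_mem _ _))
      (intCast_mem _ _)

/-- The residue field of `ℤ[ω]` at `χ` is `𝔽₃`. -/
theorem exists_eq_add_χ_mul {x : ℂ} (hx : x ∈ Zω) :
    ∃ c : ℂ, (c = 0 ∨ c = 1 ∨ c = -1) ∧ ∃ y ∈ Zω, x = c + χ * y := by
  obtain ⟨a, b, rfl⟩ := mem_Zω_iff.1 hx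
  obtain ⟨c, hc, hdvd⟩ : ∃ c : ℤ, (c = 0 ∨ c = 1 ∨ c = -1) ∧ 3 ∣ a - c + b := by
    have h : 3 ∣ a - 0 + b ∨ 3 ∣ a - 1 + b ∨ 3 ∣ a - -1 + b := by omega
    rcases h with h | h | h
    exacts [⟨0, by simp, h⟩, ⟨1, by simp, h⟩, ⟨-1, by simp, h⟩]
  refine ⟨c, by exact_mod_cast hc, _, (add_mul_ω_div_χ_mem_Zω_iff (a - c) b).2 hdvd, ?_⟩
  rw [mul_div_cancel₀ _ χ_ne_zero]
  push_cast
  ring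

theorem sq_norm_modEq {x : ℂ} (hx : x ∈ Zω) {n : ℕ} (hn : ‖x‖ ^ 2 = n)
    [Decidable (x / χ ∈ Zω)] : n ≡ if x / χ ∈ Zω then 0 else 1 [MOD 3] := by
  obtain ⟨a, b, rfl⟩ := mem_Zω_iff.1 hx
  have hN : (n : ℤ) = (a + b) ^ 2 - 3 * (a * b) := by
    exact_mod_cast hn.symm.trans (sq_norm_add_mul_ω a b)
  have hsq : (n : ℤ) ≡ (a + b) ^ 2 [ZMOD 3] :=
    (Int.modEq_iff_dvd.2 ⟨a * b, by rw [hN]; ring⟩)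
  rw [← Int.natCast_modEq_iff]
  refine hsq.trans ?_
  split_ifs with h <;> rw [add_mul_ω_div_χ_mem_Zω_iff] at h
  · exact Int.modEq_zero_iff_dvd.2 (dvd_pow h two_ne_zero)
  · have hmod : (a + b) % 3 = 1 ∨ (a + b) % 3 = 2 := by omega
    rcases hmod with hmod | hmod <;> simp [Int.ModEq, pow_two, Int.mul_emod, hmod]

open scoped Classical in
theorem three_dvd_card_div_χ_notMem_Zω {ι : Type*} [Fintype ι] {x : ι → ℂ}
    (hx : ∀ i, x i ∈ Zω) {n : ℕ} (hn : ∑ i, ‖x i‖ ^ 2 = n) (h3 : 3 ∣ n) :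
    3 ∣ Finset.card {i | x i / χ ∉ Zω} := by
  choose N hN using fun i => exists_natCast_eq_sq_norm (hx i)
  have hsum : ∑ i, N i = n := by
    simp only [hN] at hn
    exact_mod_cast hn
  have hmod : ∑ i, N i ≡ Finset.card {i | x i / χ ∉ Zω} [MOD 3] := by
    rw [Finset.card_filter]
    simp only [ite_not]
    exact Nat.ModEq.sum fun i _ => sq_norm_modEq (hx i) (hN i)
  exact (Nat.modEq_zero_iff_dvd.1 ((hmod.symm.trans (by rw [hsum])).trans h3.modEq_zero_nat))

theorem forall_div_χ_mem_Zω_of_exists {ι : Type*} [Fintype ι] (hι : Fintype.card ι ≤ 3)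
    {x : ι → ℂ} (hx : ∀ i, x i ∈ Zω) {n : ℕ} (hn : ∑ i, ‖x i‖ ^ 2 = n) (h3 : 3 ∣ n)
    (h : ∃ k, x k / χ ∈ Zω) (i : ι) : x i / χ ∈ Zω := by
  classical
  obtain ⟨k, hk⟩ := h
  have hlt : Finset.card {i | x i / χ ∉ Zω} < 3 := by
    refine (Finset.card_lt_univ_of_notMem (x := k) ?_).trans_le hι
    simpa using hk
  have hcard := Nat.eq_zero_of_dvd_of_lt (three_dvd_card_div_χ_notMem_Zω hx hn h3) hlt
  by_contra hi
  exact Finset.notMem_empty i (Finset.card_eq_zero.1 hcard ▸ by simpa using hi)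

/-- The unit group `{±1, ±ω, ±ω²}` of `ℤ[ω]`, as a submonoid of `ℂ`. -/
def eisensteinUnits : Submonoid ℂ := Submonoid.closure {-1, ω}

theorem neg_one_mem_eisensteinUnits : -1 ∈ eisensteinUnits := Submonoid.subset_closure (by simp)

theorem ω_mem_eisensteinUnits : ω ∈ eisensteinUnits := Submonoid.subset_closure (by simp)

theorem norm_eq_one_of_mem_eisensteinUnits {u : ℂ} (hu : u ∈ eisensteinUnits) : ‖u‖ = 1 := by
  induction hu using Submonoid.closure_induction with
  | mem x hx => rcases hx with rfl | rfl; exacts [by simp, norm_ω]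
  | one => exact norm_one
  | mul x y _ _ hx hy => rw [norm_mul, hx, hy, one_mul]

theorem exists_unit_mul_one_add_χ_mul_sub_one_div_three_mem {y : ℂ} (hy : y ∈ Zω) :
    ∃ u ∈ eisensteinUnits, (u * (1 + χ * y) - 1) / 3 ∈ Zω := by
  obtain ⟨c, hc, z, hz, rfl⟩ := exists_eq_add_χ_mul hy
  have hω := ω_mem_Zω
  have hχ : χ = 1 - ω := rfl
  rcases hc with rfl | rfl | rfl
  · refine ⟨1, one_mem _, ?_⟩
    have h : (1 * (1 + χ * (0 + χ * z)) - 1) / 3 = -ω * z := by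
      linear_combination z / 3 * χ_sq
    exact h ▸ mul_mem (neg_mem hω) hz
  · refine ⟨ω, ω_mem_eisensteinUnits, ?_⟩
    have h : (ω * (1 + χ * (1 + χ * z)) - 1) / 3 = ω - ω ^ 2 * z := by
      linear_combination ω * z / 3 * χ_sq + ω / 3 * hχ - ω_sq / 3
    exact h ▸ sub_mem hω (mul_mem (pow_mem hω 2) hz)
  · refine ⟨ω ^ 2, pow_mem ω_mem_eisensteinUnits 2, ?_⟩
    have h : (ω ^ 2 * (1 + χ * (-1 + χ * z)) - 1) / 3 = -z := by
      linear_combination ω ^ 2 * z / 3 * χ_sq - ω ^ 2 / 3 * hχ + (1 / 3 - z) * ω_pow_three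
    exact h ▸ neg_mem hz

/-- The units of `ℤ[ω]` surject onto those of `ℤ[ω]/(3)`. -/
theorem exists_unit_mul_sub_one_div_three_mem {x : ℂ} (hx : x ∈ Zω) (hχ : x / χ ∉ Zω) :
    ∃ u ∈ eisensteinUnits, (u * x - 1) / 3 ∈ Zω := by
  obtain ⟨c, hc, y, hy, rfl⟩ := exists_eq_add_χ_mul hx
  obtain ⟨hcu, hcc, hcy⟩ : c ∈ eisensteinUnits ∧ c * c = 1 ∧ c * y ∈ Zω := by
    rcases hc with rfl | rfl | rfl
    · rw [zero_add, mul_div_cancel_left₀ y χ_ne_zero] at hχ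
      exact absurd hy hχ
    · simpa [one_mem] using hy
    · simpa [neg_one_mem_eisensteinUnits] using hy
  obtain ⟨u, hu, h⟩ := exists_unit_mul_one_add_χ_mul_sub_one_div_three_mem hcy
  refine ⟨u * c, mul_mem hu hcu, ?_⟩
  convert h using 3
  linear_combination u * hcc

theorem exists_unit_mul_eq_one {x : ℂ} (hx : x ∈ Zω) (h : ‖x‖ = 1) :
    ∃ u ∈ eisensteinUnits, u * x = 1 := by
  have hχ : x / χ ∉ Zω := by
    intro hmem
    obtain ⟨n, hn⟩ := exists_natCast_eq_sq_norm hmem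
    have h3 : (1 : ℝ) = 3 * n := by
      rw [← hn, ← sq_norm_eq_three_mul_sq_norm_div_χ, h, one_pow]
    have : 1 = 3 * n := by exact_mod_cast h3
    omega
  obtain ⟨u, hu, hw⟩ := exists_unit_mul_sub_one_div_three_mem hx hχ
  have hux : ‖u * x‖ = 1 := by rw [norm_mul, norm_eq_one_of_mem_eisensteinUnits hu, h, mul_one]
  have hlt : ‖(u * x - 1) / 3‖ < 1 := by
    have hle : ‖u * x - 1‖ ≤ 2 := by
      linarith [norm_sub_le (u * x) 1, norm_one (α := ℂ)]
    rw [norm_div, Complex.norm_ofNat]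
    linarith
  have hzero := eq_zero_of_mem_Zω_of_norm_lt_one hw hlt
  exact ⟨u, hu, by linear_combination 3 * hzero⟩

theorem exists_norm_eq_one_of_sum_sq_norm_eq_one {ι : Type*} [Fintype ι] {x : ι → ℂ}
    (hx : ∀ i, x i ∈ Zω) (h : ∑ i, ‖x i‖ ^ 2 = 1) : ∃ k, ‖x k‖ = 1 := by
  obtain ⟨k, -, hk⟩ : ∃ k ∈ Finset.univ, ‖x k‖ ^ 2 ≠ 0 :=
    Finset.exists_ne_zero_of_sum_ne_zero (h.trans_ne one_ne_zero)
  refine ⟨k, le_antisymm ?_ ?_⟩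
  · rw [← sq_le_one_iff₀ (norm_nonneg _), ← h]
    exact Finset.single_le_sum (f := fun i => ‖x i‖ ^ 2) (fun i _ => sq_nonneg _)
      (Finset.mem_univ k)
  · contrapose! hk
    simp [eq_zero_of_mem_Zω_of_norm_lt_one (hx k) hk]

theorem eq_zero_of_sum_sq_norm_eq_one {ι E : Type*} [Fintype ι] [NormedAddCommGroup E] {x : ι → E}
    (h : ∑ i, ‖x i‖ ^ 2 = 1) {i k : ι} (hk : ‖x k‖ = 1) (hik : i ≠ k) : x i = 0 := by
  classical
  have hle : ‖x i‖ ^ 2 + ‖x k‖ ^ 2 ≤ 1 := by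
    rw [← h, ← Finset.sum_pair (f := fun i => ‖x i‖ ^ 2) hik]
    exact Finset.sum_le_sum_of_subset_of_nonneg (Finset.subset_univ _) fun _ _ _ => sq_nonneg _
  have hsq : ‖x i‖ ^ 2 = 0 := le_antisymm (by rw [hk] at hle; linarith) (sq_nonneg _)
  simpa using hsq

end EisensteinIntegers

section UnitaryOver

theorem permMatrix_apply {n R : Type*} [DecidableEq n] [Zero R] [One R] (σ : Equiv.Perm n)
    (i j : n) : σ.permMatrix R i j = if σ i = j then 1 else 0 :=
  (PEquiv.toMatrix_apply _ i j).trans (by simp)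

theorem permMatrix_mul_diagonal_mul_permMatrix_inv {n R : Type*} [Fintype n] [DecidableEq n]
    [NonAssocSemiring R] (σ : Equiv.Perm n) (d : n → R) :
    σ.permMatrix R * diagonal d * σ⁻¹.permMatrix R = diagonal (d ∘ σ) := by
  rw [PEquiv.toMatrix_toPEquiv_mul, PEquiv.mul_toMatrix_toPEquiv, submatrix_submatrix]
  exact submatrix_diagonal_equiv d σ

variable {n R : Type*} [CommRing R]

/-- The subring `A[1/c]` of `R`, meaningful as such when `c` is a unit of `R`. -/
def adjoinInv (A : Subring R) (c : R) (hc : c ∈ A) : Subring R where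
  carrier := {z | ∃ f : ℕ, c ^ f * z ∈ A}
  zero_mem' := ⟨0, by simp⟩
  one_mem' := ⟨0, by simp⟩
  add_mem' := by
    rintro a b ⟨f, hf⟩ ⟨g, hg⟩
    refine ⟨f + g, ?_⟩
    convert add_mem (mul_mem (pow_mem hc g) hf) (mul_mem (pow_mem hc f) hg) using 1
    ring
  neg_mem' := by
    rintro a ⟨f, hf⟩
    exact ⟨f, by simpa using hf⟩
  mul_mem' := by
    rintro a b ⟨f, hf⟩ ⟨g, hg⟩
    refine ⟨f + g, ?_⟩
    convert mul_mem hf hg using 1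
    ring

theorem le_adjoinInv (A : Subring R) {c : R} (hc : c ∈ A) : A ≤ adjoinInv A c hc :=
  fun z hz => ⟨0, by simpa using hz⟩

theorem exists_forall_pow_mul_mem {ι : Type*} [Finite ι] {A : Subring R} {c : R} (hc : c ∈ A)
    {v : ι → R} (hv : ∀ i, v i ∈ adjoinInv A c hc) : ∃ k : ℕ, ∀ i, c ^ k * v i ∈ A := by
  choose f hf using hv
  obtain ⟨k, hk⟩ := Finite.exists_le f
  refine ⟨k, fun i => ?_⟩
  rw [← Nat.sub_add_cancel (hk i), pow_add, mul_assoc]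
  exact mul_mem (pow_mem hc _) (hf i)

variable [StarRing R] [Fintype n] [DecidableEq n]

/-- `U(n, A)`: the unitary matrices over `R` whose entries lie in the subring `A`. -/
def unitaryOver (n : Type*) [Fintype n] [DecidableEq n] (A : Subring R) :
    Submonoid (Matrix n n R) :=
  unitaryGroup n R ⊓ A.matrix.toSubmonoid

theorem mem_unitaryOver_iff {A : Subring R} {U : Matrix n n R} :
    U ∈ unitaryOver n A ↔ (∀ i j, U i j ∈ A) ∧ U * Uᴴ = 1 := by
  rw [unitaryOver, Submonoid.mem_inf, mem_unitaryGroup_iff, star_eq_conjTranspose, and_comm]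
  rfl

theorem conjTranspose_mem_unitaryOver {A : Subring R} (hA : ∀ z ∈ A, star z ∈ A)
    {U : Matrix n n R} (hU : U ∈ unitaryOver n A) : Uᴴ ∈ unitaryOver n A := by
  rw [mem_unitaryOver_iff] at hU ⊢
  refine ⟨fun i j => hA _ (hU.1 j i), ?_⟩
  rw [conjTranspose_conjTranspose]
  exact mul_eq_one_comm.1 hU.2

theorem sum_sq_norm_row_eq_one {𝕜 : Type*} [RCLike 𝕜] {U : Matrix n n 𝕜} (hU : U * Uᴴ = 1)
    (i : n) : ∑ j, ‖U i j‖ ^ 2 = 1 := by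
  have h : ((∑ j, ‖U i j‖ ^ 2 : ℝ) : 𝕜) = (U * Uᴴ) i i := by
    simp [mul_apply, ← RCLike.mul_conj]
  rw [hU, one_apply_eq] at h
  exact_mod_cast h

theorem sum_sq_norm_col_eq_one {𝕜 : Type*} [RCLike 𝕜] {U : Matrix n n 𝕜} (hU : U * Uᴴ = 1)
    (j : n) : ∑ i, ‖U i j‖ ^ 2 = 1 := by
  have hU' : Uᴴ * Uᴴᴴ = 1 := by
    rw [conjTranspose_conjTranspose]
    exact mul_eq_one_comm.1 hU
  simpa using sum_sq_norm_row_eq_one hU' j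

theorem exists_unit_diagonal_mul_eq_permMatrix {U : Matrix n n ℂ} (hU : U ∈ unitaryOver n Zω) :
    ∃ d : n → ℂ, (∀ i, d i ∈ eisensteinUnits) ∧
      ∃ σ : Equiv.Perm n, diagonal d * U = σ.permMatrix ℂ := by
  obtain ⟨hint, hUU⟩ := mem_unitaryOver_iff.1 hU
  have hrow := sum_sq_norm_row_eq_one hUU
  choose σ hσ using fun i => exists_norm_eq_one_of_sum_sq_norm_eq_one (hint i) (hrow i)
  choose d hd hdU using fun i => exists_unit_mul_eq_one (hint i (σ i)) (hσ i)
  have hinj : Function.Injective σ := by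
    intro i k hik
    by_contra hne
    have hzero : U i (σ k) = 0 :=
      eq_zero_of_sum_sq_norm_eq_one (sum_sq_norm_col_eq_one hUU (σ k)) (hσ k) hne
    simpa [hik, hzero] using hσ i
  refine ⟨d, hd, Equiv.ofBijective σ (Finite.injective_iff_bijective.1 hinj), ?_⟩
  ext i j
  rw [diagonal_mul, permMatrix_apply, Equiv.ofBijective_apply]
  split_ifs with hj
  · rw [← hj, hdU]
  · rw [eq_zero_of_sum_sq_norm_eq_one (hrow i) (hσ i) (Ne.symm hj), mul_zero]

end UnitaryOver

section Gates

/-- The group of Clifford+R gates. A monoid suffices since the generating set is stable under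
inversion. -/
def cliffordR : Submonoid (Matrix (Fin 3) (Fin 3) ℂ) :=
  Submonoid.closure {Hgate, Sgate, Rgate, Hgateᴴ, Sgateᴴ, Rgateᴴ}

theorem Hgate_mem_cliffordR : Hgate ∈ cliffordR := Submonoid.subset_closure (by simp)

theorem Sgate_mem_cliffordR : Sgate ∈ cliffordR := Submonoid.subset_closure (by simp)

theorem Rgate_mem_cliffordR : Rgate ∈ cliffordR := Submonoid.subset_closure (by simp)

theorem conjTranspose_mem_cliffordR {g : Matrix (Fin 3) (Fin 3) ℂ} (hg : g ∈ cliffordR) :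
    gᴴ ∈ cliffordR := by
  induction hg using Submonoid.closure_induction with
  | mem g hg =>
    apply Submonoid.subset_closure
    rcases hg with rfl | rfl | rfl | rfl | rfl | rfl <;> simp
  | one => simp
  | mul g h _ _ hg hh => rw [conjTranspose_mul]; exact mul_mem hh hg

/-- The ring `ℤ[ω][1/χ]`. -/
def ZωInvχ : Subring ℂ := adjoinInv Zω χ χ_mem_Zω

theorem Zω_le_ZωInvχ : Zω ≤ ZωInvχ := le_adjoinInv Zω χ_mem_Zω

theorem star_mem_ZωInvχ {z : ℂ} (hz : z ∈ ZωInvχ) : star z ∈ ZωInvχ := by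
  obtain ⟨f, hf⟩ := hz
  refine ⟨f, ?_⟩
  have h : χ ^ f * star z = (-ω) ^ f * star (χ ^ f * z) := by
    rw [star_mul', star_pow, star_χ, ← mul_assoc, ← mul_pow]
    congr 2
    linear_combination -χ * ω_pow_three
  exact h ▸ mul_mem (pow_mem (neg_mem ω_mem_Zω) f) (star_mem_Zω hf)

theorem Hgate_apply (i j : Fin 3) : Hgate i j = (ω * χ)⁻¹ * ω ^ (i * j : ℕ) := by
  have h4 : ω ^ 4 = ω := by linear_combination ω * ω_pow_three
  fin_cases i <;> fin_cases j <;> simp [Hgate, χ, h4]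

theorem sum_ω_pow_mul (m : ℕ) : ∑ k : Fin 3, ω ^ (m * k : ℕ) = if 3 ∣ m then 3 else 0 := by
  split_ifs with h
  · obtain ⟨l, rfl⟩ := h
    simp only [mul_assoc, pow_mul, ω_pow_three, one_pow]
    simp
  · have hprim := isPrimitiveRoot_ω.pow_of_coprime m
      ((Nat.prime_three.coprime_iff_not_dvd.2 h).symm)
    simp only [pow_mul]
    rw [Fin.sum_univ_eq_sum_range, hprim.geom_sum_eq_zero (by norm_num)]

theorem ω_mul_χ_sq : (ω * χ) ^ 2 = -3 := by
  linear_combination ω ^ 2 * χ_sq - 3 * ω_pow_three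

theorem inv_ω_mul_χ : (ω * χ)⁻¹ = -(ω * χ) / 3 :=
  inv_eq_of_mul_eq_one_right (by linear_combination -ω_mul_χ_sq / 3)

theorem star_Hgate_apply (i j : Fin 3) : star (Hgate i j) = -(ω * χ)⁻¹ * ω ^ (2 * i * j : ℕ) := by
  rw [Hgate_apply, inv_ω_mul_χ, star_mul', star_div₀, star_neg, star_mul', star_pow, star_ω, star_χ,
    star_ofNat, ← pow_mul, mul_assoc 2]
  linear_combination ω * χ / 3 * ω ^ (2 * (i * j) : ℕ) * ω_pow_three

theorem Hgate_mul_Hgate : Hgate * Hgate = -(Equiv.neg (Fin 3)).permMatrix ℂ := by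
  ext i j
  have hdvd : 3 ∣ (i + j : ℕ) ↔ -i = j := by decide +revert
  have hterm (k : Fin 3) : Hgate i k * Hgate k j = -1 / 3 * ω ^ ((i + j) * k : ℕ) := by
    rw [Hgate_apply, Hgate_apply, inv_ω_mul_χ, mul_comm (k : ℕ), add_mul, pow_add]
    linear_combination (ω ^ (i * k : ℕ) * ω ^ (j * k : ℕ) / 9) * ω_mul_χ_sq
  rw [neg_apply]
  simp only [mul_apply, hterm, ← Finset.mul_sum, sum_ω_pow_mul, hdvd, permMatrix_apply,
    Equiv.neg_apply]
  split_ifs <;> norm_num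

theorem Hgate_mul_conjTranspose : Hgate * Hgateᴴ = 1 := by
  ext i j
  have hdvd : 3 ∣ (i + 2 * j : ℕ) ↔ i = j := by decide +revert
  have hterm (k : Fin 3) : Hgate i k * star (Hgate j k) = 1 / 3 * ω ^ ((i + 2 * j) * k : ℕ) := by
    rw [star_Hgate_apply, Hgate_apply, inv_ω_mul_χ, add_mul, pow_add]
    linear_combination (-ω ^ (i * k : ℕ) * ω ^ (2 * j * k : ℕ) / 9) * ω_mul_χ_sq
  simp only [mul_apply, conjTranspose_apply, hterm, ← Finset.mul_sum, sum_ω_pow_mul, hdvd,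
    one_apply]
  split_ifs <;> norm_num

theorem Hgate_mem_unitaryOver : Hgate ∈ unitaryOver (Fin 3) ZωInvχ := by
  refine mem_unitaryOver_iff.2 ⟨fun i j => ⟨2, ?_⟩, Hgate_mul_conjTranspose⟩
  have h : χ ^ 2 * Hgate i j = ω ^ 2 * χ * ω ^ (i * j : ℕ) := by
    rw [Hgate_apply, inv_ω_mul_χ]
    linear_combination -ω * χ / 3 * ω ^ (i * j : ℕ) * χ_sq
  exact h ▸ mul_mem (mul_mem (pow_mem ω_mem_Zω 2) χ_mem_Zω) (pow_mem ω_mem_Zω _)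

theorem diagonal_mem_unitaryOver {n : Type*} [Fintype n] [DecidableEq n] {A : Subring ℂ}
    {d : n → ℂ} (hd : ∀ i, d i ∈ A ∧ ‖d i‖ = 1) : diagonal d ∈ unitaryOver n A := by
  refine mem_unitaryOver_iff.2
    ⟨(diagonal_mem_matrix_iff (zero_mem _)).2 fun i => (hd i).1, ?_⟩
  rw [diagonal_conjTranspose, diagonal_mul_diagonal, ← diagonal_one]
  congr 1
  ext i
  simp [Complex.mul_conj', (hd i).2]

theorem cliffordR_le_unitaryOver : cliffordR ≤ unitaryOver (Fin 3) ZωInvχ := by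
  have hω : ω ∈ ZωInvχ := Zω_le_ZωInvχ ω_mem_Zω
  have hH := Hgate_mem_unitaryOver
  have hS : Sgate ∈ unitaryOver (Fin 3) ZωInvχ :=
    diagonal_mem_unitaryOver (by simp [Fin.forall_fin_succ, hω, norm_ω])
  have hR : Rgate ∈ unitaryOver (Fin 3) ZωInvχ :=
    diagonal_mem_unitaryOver (by simp [Fin.forall_fin_succ])
  have hstar {U : Matrix (Fin 3) (Fin 3) ℂ} (hU : U ∈ unitaryOver (Fin 3) ZωInvχ) :
      Uᴴ ∈ unitaryOver (Fin 3) ZωInvχ :=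
    conjTranspose_mem_unitaryOver (fun _ => star_mem_ZωInvχ) hU
  refine Submonoid.closure_le.2 ?_
  rintro U (rfl | rfl | rfl | rfl | rfl | rfl)
  exacts [hH, hS, hR, hstar hH, hstar hS, hstar hR]

theorem mem_cliffordR_of_mul_mem {g U : Matrix (Fin 3) (Fin 3) ℂ} (hg : g ∈ cliffordR)
    (h : g * U ∈ cliffordR) : U ∈ cliffordR := by
  have hgg : gᴴ * g = 1 :=
    mul_eq_one_comm.1 (mem_unitaryOver_iff.1 (cliffordR_le_unitaryOver hg)).2
  rw [← one_mul U, ← hgg, mul_assoc]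
  exact mul_mem (conjTranspose_mem_cliffordR hg) h

theorem diagonal_ω_pow_mem_cliffordR :
    diagonal (fun i : Fin 3 => ω ^ (i : ℕ)) ∈ cliffordR := by
  set S' : Matrix (Fin 3) (Fin 3) ℂ := diagonal (![1, ω, 1] ∘ Equiv.neg (Fin 3)) with hS'
  have hS'_eq : Hgate * Hgate * Sgate * (Hgate * Hgate) = S' := by
    rw [Hgate_mul_Hgate, neg_mul, neg_mul_neg]
    exact permMatrix_mul_diagonal_mul_permMatrix_inv _ _
  have hS'_mem : S' ∈ cliffordR := by
    have hHH := mul_mem Hgate_mem_cliffordR Hgate_mem_cliffordR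
    exact hS'_eq ▸ mul_mem (mul_mem hHH Sgate_mem_cliffordR) hHH
  have hZ : diagonal (fun i : Fin 3 => ω ^ (i : ℕ)) = Sgate * S' ^ 2 := by
    rw [Sgate, hS', diagonal_pow, diagonal_mul_diagonal]
    congr 1
    ext i
    fin_cases i <;> simp
  exact hZ ▸ mul_mem Sgate_mem_cliffordR (pow_mem hS'_mem 2)

theorem permMatrix_addRight_one_mem_cliffordR :
    (Equiv.addRight (1 : Fin 3)).permMatrix ℂ ∈ cliffordR := by
  set Z : Matrix (Fin 3) (Fin 3) ℂ := diagonal fun i : Fin 3 => ω ^ (i : ℕ) with hZ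
  have hcomm : (Equiv.addRight (1 : Fin 3)).permMatrix ℂ * Hgate = Hgate * Z := by
    ext i j
    have hmod : ((i + 1 : Fin 3) * j : ℕ) ≡ i * j + j [MOD 3] := by decide +revert
    have hpow : ω ^ ((i + 1 : Fin 3) * j : ℕ) = ω ^ (i * j + j : ℕ) :=
      pow_eq_pow_of_modEq hmod ω_pow_three
    rw [PEquiv.toMatrix_toPEquiv_mul, submatrix_apply, hZ, mul_diagonal, Hgate_apply, Hgate_apply,
      mul_assoc, ← pow_add, ← hpow]
    rfl
  rw [← mul_one ((Equiv.addRight (1 : Fin 3)).permMatrix ℂ), ← Hgate_mul_conjTranspose, ← mul_assoc,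
    hcomm]
  exact mul_mem (mul_mem Hgate_mem_cliffordR diagonal_ω_pow_mem_cliffordR)
    (conjTranspose_mem_cliffordR Hgate_mem_cliffordR)

theorem permMatrix_mul_mem_cliffordR {σ τ : Equiv.Perm (Fin 3)} (hσ : σ.permMatrix ℂ ∈ cliffordR)
    (hτ : τ.permMatrix ℂ ∈ cliffordR) : (σ * τ).permMatrix ℂ ∈ cliffordR := by
  rw [permMatrix_mul]
  exact mul_mem hτ hσ

theorem permMatrix_addRight_mem_cliffordR (a : Fin 3) :
    (Equiv.addRight a).permMatrix ℂ ∈ cliffordR := by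
  have h1 := permMatrix_addRight_one_mem_cliffordR
  have ha : Equiv.addRight a = 1 ∨ Equiv.addRight a = Equiv.addRight 1 ∨
      Equiv.addRight a = Equiv.addRight 1 * Equiv.addRight 1 := by
    decide +revert
  rcases ha with ha | ha | ha <;> rw [ha]
  · rw [permMatrix_one]
    exact one_mem _
  · exact h1
  · exact permMatrix_mul_mem_cliffordR h1 h1

theorem diagonal_comp_mem_cliffordR {σ : Equiv.Perm (Fin 3)} (hσ : σ.permMatrix ℂ ∈ cliffordR)
    {d : Fin 3 → ℂ} (hd : diagonal d ∈ cliffordR) : diagonal (d ∘ σ) ∈ cliffordR := by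
  rw [← permMatrix_mul_diagonal_mul_permMatrix_inv, ← conjTranspose_permMatrix]
  exact mul_mem (mul_mem hσ hd) (conjTranspose_mem_cliffordR hσ)

theorem diagonal_mulSingle_mem_cliffordR {i : Fin 3} {z : ℂ}
    (h : diagonal (Pi.mulSingle i z) ∈ cliffordR) (j : Fin 3) :
    diagonal (Pi.mulSingle j z) ∈ cliffordR := by
  have hshift : Pi.mulSingle i z ∘ Equiv.addRight (i - j) = (Pi.mulSingle j z : Fin 3 → ℂ) := by
    ext k
    simp [Pi.mulSingle_apply, ← eq_sub_iff_add_eq]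
  exact hshift ▸ diagonal_comp_mem_cliffordR (permMatrix_addRight_mem_cliffordR (i - j)) h

theorem diagonal_mulSingle_unit_mem_cliffordR (i : Fin 3) {u : ℂ} (hu : u ∈ eisensteinUnits) :
    diagonal (Pi.mulSingle i u) ∈ cliffordR := by
  induction hu using Submonoid.closure_induction with
  | mem u hu =>
    rcases hu with rfl | rfl
    · have hR : Rgate = diagonal (Pi.mulSingle 2 (-1)) := by
        rw [Rgate]
        congr 1
        ext i
        fin_cases i <;> rfl
      exact diagonal_mulSingle_mem_cliffordR (hR ▸ Rgate_mem_cliffordR) i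
    · have hS : Sgate = diagonal (Pi.mulSingle 1 ω) := by
        rw [Sgate]
        congr 1
        ext i
        fin_cases i <;> rfl
      exact diagonal_mulSingle_mem_cliffordR (hS ▸ Sgate_mem_cliffordR) i
  | one => simp
  | mul u v _ _ hu hv =>
    rw [Pi.mulSingle_mul]
    exact diagonal_mul_diagonal' (Pi.mulSingle i u) (Pi.mulSingle i v) ▸ mul_mem hu hv

theorem diagonal_mem_cliffordR {d : Fin 3 → ℂ} (hd : ∀ i, d i ∈ eisensteinUnits) :
    diagonal d ∈ cliffordR :=
  Submonoid.pi_mem_of_mulSingle_mem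
    (H := cliffordR.comap (diagonalRingHom (Fin 3) ℂ).toMonoidHom) d
    fun i => diagonal_mulSingle_unit_mem_cliffordR i (hd i)

theorem permMatrix_mem_cliffordR (σ : Equiv.Perm (Fin 3)) : σ.permMatrix ℂ ∈ cliffordR := by
  have hneg : (Equiv.neg (Fin 3)).permMatrix ℂ ∈ cliffordR := by
    have h : (Equiv.neg (Fin 3)).permMatrix ℂ = diagonal (fun _ => -1) * (Hgate * Hgate) := by
      rw [Hgate_mul_Hgate, ← diagonal_neg, diagonal_one, neg_mul_neg, one_mul]
    exact h ▸ mul_mem (diagonal_mem_cliffordR fun _ => neg_one_mem_eisensteinUnits)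
      (mul_mem Hgate_mem_cliffordR Hgate_mem_cliffordR)
  -- Every permutation of `ℤ/3ℤ` is affine.
  obtain ⟨a, rfl | rfl⟩ : ∃ a, σ = Equiv.addRight a ∨ σ = Equiv.addRight a * Equiv.neg (Fin 3) := by
    decide +revert
  · exact permMatrix_addRight_mem_cliffordR a
  · exact permMatrix_mul_mem_cliffordR (permMatrix_addRight_mem_cliffordR a) hneg

theorem unitaryOver_Zω_le_cliffordR : unitaryOver (Fin 3) Zω ≤ cliffordR := by
  intro U hU
  obtain ⟨d, hd, σ, hdU⟩ := exists_unit_diagonal_mul_eq_permMatrix hU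
  exact mem_cliffordR_of_mul_mem (diagonal_mem_cliffordR hd)
    (hdU ▸ permMatrix_mem_cliffordR σ)

end Gates

section Reduction

/-- Modulo `3` the vector `y` is `(1, 1, 1)`, which `H` maps to `(-ω * χ, 0, 0)`. -/
theorem Hgate_mulVec_div_χ_mem_Zω {y : Fin 3 → ℂ} (hy : ∀ j, (y j - 1) / 3 ∈ Zω) (i : Fin 3) :
    (Hgate *ᵥ y) i / χ ∈ Zω := by
  have hsplit (j : Fin 3) : Hgate i j * y j =
      -(ω * χ) / 3 * ω ^ (i * j : ℕ) - ω * χ * (ω ^ (i * j : ℕ) * ((y j - 1) / 3)) := by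
    rw [Hgate_apply, inv_ω_mul_χ]
    ring
  have h : (Hgate *ᵥ y) i / χ =
      -ω * ((if 3 ∣ (i : ℕ) then 1 else 0) + ∑ j : Fin 3, ω ^ (i * j : ℕ) * ((y j - 1) / 3)) := by
    rw [div_eq_iff χ_ne_zero]
    simp only [mulVec, dotProduct, hsplit, Finset.sum_sub_distrib, ← Finset.mul_sum, sum_ω_pow_mul]
    split_ifs <;> ring
  rw [h]
  refine mul_mem (neg_mem ω_mem_Zω) (add_mem ?_ (sum_mem fun j _ => ?_))
  · split_ifs
    exacts [one_mem _, zero_mem _]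
  · exact mul_mem (pow_mem ω_mem_Zω _) (hy j)

theorem exists_mulVec_div_χ_mem_Zω {x : Fin 3 → ℂ} (hx : ∀ i, x i ∈ Zω) {n : ℕ}
    (hn : ∑ i, ‖x i‖ ^ 2 = n) (h3 : 3 ∣ n) :
    ∃ g ∈ cliffordR, ∀ i, (g *ᵥ x) i / χ ∈ Zω := by
  by_cases h : ∃ k, x k / χ ∈ Zω
  · exact ⟨1, one_mem _, by simpa using forall_div_χ_mem_Zω_of_exists le_rfl hx hn h3 h⟩
  · rw [not_exists] at h
    choose u hu hux using fun i => exists_unit_mul_sub_one_div_three_mem (hx i) (h i)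
    refine ⟨Hgate * diagonal u, mul_mem Hgate_mem_cliffordR (diagonal_mem_cliffordR hu), ?_⟩
    rw [← mulVec_mulVec]
    exact Hgate_mulVec_div_χ_mem_Zω fun j => by rw [mulVec_diagonal]; exact hux j

theorem sum_sq_norm_χ_pow_mul {ι : Type*} [Fintype ι] {v : ι → ℂ} (h : ∑ i, ‖v i‖ ^ 2 = 1)
    (k : ℕ) : ∑ i, ‖χ ^ k * v i‖ ^ 2 = (3 ^ k : ℕ) := by
  simp only [norm_mul, norm_pow, mul_pow, ← Finset.mul_sum, h, pow_right_comm _ k, norm_χ_sq]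
  simp

theorem exists_mul_col_mem_Zω {U : Matrix (Fin 3) (Fin 3) ℂ} (hU : U ∈ unitaryOver (Fin 3) ZωInvχ)
    (j : Fin 3) : ∃ g ∈ cliffordR, ∀ i, (g * U) i j ∈ Zω := by
  obtain ⟨k, hk⟩ := exists_forall_pow_mul_mem χ_mem_Zω fun i => (mem_unitaryOver_iff.1 hU).1 i j
  induction k generalizing U with
  | zero => exact ⟨1, one_mem _, by simpa using hk⟩
  | succ k ih =>
    have hcol := sum_sq_norm_col_eq_one (mem_unitaryOver_iff.1 hU).2 j
    obtain ⟨g, hg, hgx⟩ := exists_mulVec_div_χ_mem_Zω hk (sum_sq_norm_χ_pow_mul hcol (k + 1))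
      (dvd_pow_self 3 k.succ_ne_zero)
    have hgU (i : Fin 3) : χ ^ k * (g * U) i j ∈ Zω := by
      convert hgx i using 1
      rw [eq_div_iff χ_ne_zero, mul_apply, mulVec, dotProduct, Finset.mul_sum, Finset.sum_mul]
      exact Finset.sum_congr rfl fun l _ => by ring
    obtain ⟨g', hg', hg'U⟩ := ih (mul_mem (cliffordR_le_unitaryOver hg) hU) hgU
    exact ⟨g' * g, mul_mem hg' hg, by rwa [mul_assoc]⟩

theorem mem_Zω_of_sum_sq_norm_eq_one_of_eq_zero {ι : Type*} [Fintype ι]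
    (hι : Fintype.card ι ≤ 3) {v : ι → ℂ} (hv : ∀ i, v i ∈ ZωInvχ) (h : ∑ i, ‖v i‖ ^ 2 = 1)
    {l : ι} (hl : v l = 0) (i : ι) : v i ∈ Zω := by
  obtain ⟨k, hk⟩ := exists_forall_pow_mul_mem χ_mem_Zω hv
  induction k with
  | zero => simpa using hk i
  | succ k ih =>
    refine ih fun i => ?_
    have hl' : ∃ l, χ ^ (k + 1) * v l / χ ∈ Zω := ⟨l, by simp [hl]⟩
    convert forall_div_χ_mem_Zω_of_exists hι hk (sum_sq_norm_χ_pow_mul h (k + 1))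
      (dvd_pow_self 3 k.succ_ne_zero) hl' i using 1
    rw [eq_div_iff χ_ne_zero]
    ring

theorem mem_unitaryOver_Zω_of_col_mem {U : Matrix (Fin 3) (Fin 3) ℂ}
    (hU : U ∈ unitaryOver (Fin 3) ZωInvχ) {j : Fin 3} (hj : ∀ i, U i j ∈ Zω) :
    U ∈ unitaryOver (Fin 3) Zω := by
  obtain ⟨hent, hUU⟩ := mem_unitaryOver_iff.1 hU
  obtain ⟨k, hk⟩ := exists_norm_eq_one_of_sum_sq_norm_eq_one hj (sum_sq_norm_col_eq_one hUU j)
  refine mem_unitaryOver_iff.2 ⟨fun i l => ?_, hUU⟩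
  rcases eq_or_ne l j with rfl | hlj
  · exact hj i
  · have hzero : U k l = 0 := eq_zero_of_sum_sq_norm_eq_one (sum_sq_norm_row_eq_one hUU k) hk hlj
    exact mem_Zω_of_sum_sq_norm_eq_one_of_eq_zero le_rfl (fun i => hent i l)
      (sum_sq_norm_col_eq_one hUU l) hzero i

theorem unitaryOver_ZωInvχ_le_cliffordR : unitaryOver (Fin 3) ZωInvχ ≤ cliffordR := by
  intro U hU
  obtain ⟨g, hg, hcol⟩ := exists_mul_col_mem_Zω hU 0
  have hgU : g * U ∈ unitaryOver (Fin 3) Zω :=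
    mem_unitaryOver_Zω_of_col_mem (mul_mem (cliffordR_le_unitaryOver hg) hU) hcol
  exact mem_cliffordR_of_mul_mem hg (unitaryOver_Zω_le_cliffordR hgU)

end Reduction

/-- exact synthesis for Clifford+R: the group generated by
`H`, `S` and `R` — i.e. all finite products of these unitary matrices and their
inverses (the inverse of a unitary being its conjugate transpose) — equals
`U(3, ℤ[ω][1/χ])`, the group of all `3 × 3` unitary matrices whose entries lie in
`ℤ[ω][1/χ]`. -/
theorem cliffordR_eq_unitary_ring :
    (↑(Submonoid.closure ({Hgate, Sgate, Rgate, Hgate.conjTranspose,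
        Sgate.conjTranspose, Rgate.conjTranspose} :
          Set (Matrix (Fin 3) (Fin 3) ℂ))) : Set (Matrix (Fin 3) (Fin 3) ℂ)) =
      {U : Matrix (Fin 3) (Fin 3) ℂ |
        (∀ i j, ∃ f : ℕ, χ ^ f * U i j ∈ Zω) ∧ U * U.conjTranspose = 1} := by
  have h : cliffordR = unitaryOver (Fin 3) ZωInvχ :=
    le_antisymm cliffordR_le_unitaryOver unitaryOver_ZωInvχ_le_cliffordR
  ext U
  exact (SetLike.ext_iff.1 h U).trans mem_unitaryOver_iff

end
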